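/- arXiv:1204.3827 — 2 statements merged into one kernel-verified Lean document; each statement's English description precedes it below -/
import Mathlib

section
/- Let Y be an irreducible Stein space, ψ a real analytic strongly plurisubharmonic exhaustion function on Y, X = {y ∈ Y : ψ(y) < c} for some c ∈ ℝ, and let A ⊆ X be relatively compact in X. Then for every x₀ ∈ ∂X one has lim_{X∋x→x₀} h_{A,X}(x) = 1. -/
/-!
Common framework: plurisubharmonic functions, (reduced) complex spaces modeled by
charts onto analytic subvarieties of open subsets of finite-dimensional complex
normed spaces, relative extremal functions, pluripolarity, Stein spaces,
Monge–Ampère operators, and crosses in products of complex spaces.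
-/

open Set Filter Topology Metric

noncomputable section

/-- `ℂⁿ`, modeled as functions `Fin n → ℂ`. -/
abbrev Cn (n : ℕ) : Type := Fin n → ℂ

/-- A real-valued function is harmonic on a subset of `ℂ` if it is locally
the real part of a holomorphic function. -/
def HarmonicOnCC (h : ℂ → ℝ) (Ω : Set ℂ) : Prop :=
  ∀ z ∈ Ω, ∃ W : Set ℂ, IsOpen W ∧ z ∈ W ∧ W ⊆ Ω ∧
    ∃ f : ℂ → ℂ, DifferentiableOn ℂ f W ∧ ∀ w ∈ W, h w = (f w).re

/-- Subharmonicity for `[-∞,∞)`-valued functions (modeled as `EReal`-valued, with value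
`⊤` excluded in applications): upper semicontinuity together with domination on closed
discs by harmonic comparison functions. -/
def SubharmonicOnCC (u : ℂ → EReal) (Ω : Set ℂ) : Prop :=
  UpperSemicontinuousOn u Ω ∧
  ∀ (a : ℂ) (r : ℝ), 0 < r → closedBall a r ⊆ Ω →
    ∀ h : ℂ → ℝ, ContinuousOn h (closedBall a r) → HarmonicOnCC h (ball a r) →
      (∀ z ∈ sphere a r, u z ≤ (h z : EReal)) →
      ∀ z ∈ closedBall a r, u z ≤ (h z : EReal)

section NormedE

variable {E : Type*} [NormedAddCommGroup E] [NormedSpace ℂ E]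

/-- Plurisubharmonicity on an open subset `Ω` of a complex normed space: the function is
`< ⊤`, upper semicontinuous, not identically `-∞` on any nonempty open subset (equivalently,
on no irreducible = connected component of `Ω`), and subharmonic along every complex line. -/
def PSHOnE (u : E → EReal) (Ω : Set E) : Prop :=
  (∀ z ∈ Ω, u z < ⊤) ∧ UpperSemicontinuousOn u Ω ∧
  (¬ ∃ U : Set E, U ⊆ Ω ∧ IsOpen U ∧ U.Nonempty ∧ ∀ z ∈ U, u z = ⊥) ∧
  ∀ a b : E, SubharmonicOnCC (fun w : ℂ => u (a + w • b)) {w : ℂ | a + w • b ∈ Ω}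

/-- Strong (strict) plurisubharmonicity of a real-valued function: locally, subtracting a
small multiple of `‖z‖²` preserves plurisubharmonicity. -/
def StronglyPSHOnE (u : E → ℝ) (Ω : Set E) : Prop :=
  ∀ x ∈ Ω, ∃ ε : ℝ, 0 < ε ∧ ∃ U : Set E, IsOpen U ∧ x ∈ U ∧ U ⊆ Ω ∧
    PSHOnE (fun z => ((u z - ε * ‖z‖ ^ 2 : ℝ) : EReal)) U

/-- An analytic subvariety `B` of an open set `V`: locally the common zero locus of
finitely many holomorphic functions. -/
def IsSubvariety (B V : Set E) : Prop :=
  IsOpen V ∧ B ⊆ V ∧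
  ∀ z ∈ V, ∃ W : Set E, IsOpen W ∧ z ∈ W ∧ W ⊆ V ∧
    ∃ (m : ℕ) (F : Fin m → E → ℂ), (∀ i, DifferentiableOn ℂ (F i) W) ∧
      B ∩ W = {w ∈ W | ∀ i, F i w = 0}

end NormedE

/-- A chart `(U, φ, B, V)` of a complex space `X`: a homeomorphism `φ` of an open set
`U ⊆ X` onto an analytic subvariety `B` of an open subset `V` of a finite-dimensional
complex normed space. -/
structure CChart (X : Type*) [TopologicalSpace X] where
  E : Type
  [nacg : NormedAddCommGroup E]
  [nsp : NormedSpace ℂ E]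
  [fd : FiniteDimensional ℂ E]
  U : Set X
  V : Set E
  B : Set E
  φ : X → E
  openU : IsOpen U
  subvariety : IsSubvariety B V
  mapsToB : ∀ x ∈ U, φ x ∈ B
  injOn : Set.InjOn φ U
  image_eq : φ '' U = B
  contOn : ContinuousOn φ U
  open_image : ∀ W : Set X, W ⊆ U → IsOpen W → ∃ V'' : Set E, IsOpen V'' ∧ φ '' W = B ∩ V''

attribute [instance] CChart.nacg CChart.nsp CChart.fd

/-- Holomorphic compatibility of two charts: the transition map extends to a holomorphic
map of ambient open sets near every point of the overlap. -/
def ChartCompat {X : Type*} [TopologicalSpace X] (c d : CChart X) : Prop :=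
  ∀ x ∈ c.U ∩ d.U, ∃ W : Set c.E, IsOpen W ∧ c.φ x ∈ W ∧
    ∃ F : c.E → d.E, DifferentiableOn ℂ F W ∧
      ∀ y ∈ c.U ∩ d.U, c.φ y ∈ W → F (c.φ y) = d.φ y

/-- A (reduced) complex space structure on a topological space `X`: an atlas of pairwise
holomorphically compatible charts onto analytic subvarieties covering `X`. -/
structure CSpace (X : Type*) [TopologicalSpace X] where
  atlas : Set (CChart X)
  chart_cover : ∀ x : X, ∃ c ∈ atlas, x ∈ c.U
  compat : ∀ c ∈ atlas, ∀ d ∈ atlas, ChartCompat c d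

section Space

variable {X : Type*} [TopologicalSpace X]

/-- A function `f` is holomorphic on an open subset `D` of the complex space: near every
point it is, in some chart, the restriction of an ambient holomorphic function. -/
def SpaceHolOn (S : CSpace X) (f : X → ℂ) (D : Set X) : Prop :=
  ∀ x ∈ D, ∃ c ∈ S.atlas, x ∈ c.U ∧ ∃ V' : Set c.E, IsOpen V' ∧ V' ⊆ c.V ∧ c.φ x ∈ V' ∧
    {y ∈ c.U | c.φ y ∈ V'} ⊆ D ∧
    ∃ F : c.E → ℂ, DifferentiableOn ℂ F V' ∧ ∀ y ∈ c.U, c.φ y ∈ V' → F (c.φ y) = f y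

/-- A holomorphic map from a subset of `ℂ` into a complex space: continuous, and
holomorphic when read in any chart. -/
def HolMapTo (S : CSpace X) (f : ℂ → X) (Ω : Set ℂ) : Prop :=
  ContinuousOn f Ω ∧
  ∀ c ∈ S.atlas, DifferentiableOn ℂ (fun w => c.φ (f w)) (Ω ∩ f ⁻¹' c.U)

/-- An analytic subset `A` of an open subset `D` of a complex space: locally (in charts)
cut out in `D` by finitely many holomorphic equations. -/
def IsAnalyticIn (S : CSpace X) (A D : Set X) : Prop :=
  A ⊆ D ∧ ∀ x ∈ D, ∃ c ∈ S.atlas, x ∈ c.U ∧ ∃ V' : Set c.E, IsOpen V' ∧ V' ⊆ c.V ∧ c.φ x ∈ V' ∧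
    ∃ (m : ℕ) (F : Fin m → c.E → ℂ), (∀ i, DifferentiableOn ℂ (F i) V') ∧
      ∀ y ∈ c.U, c.φ y ∈ V' → y ∈ D → (y ∈ A ↔ ∀ i, F i (c.φ y) = 0)

/-- Irreducibility of the open subset `D` of a complex space. -/
def IsIrreducibleIn (S : CSpace X) (D : Set X) : Prop :=
  D.Nonempty ∧ ∀ A₁ A₂ : Set X, IsAnalyticIn S A₁ D → IsAnalyticIn S A₂ D →
    A₁ ∪ A₂ = D → A₁ = D ∨ A₂ = D

/-- An irreducible analytic subset of `D`. -/
def IsIrreducibleAnalyticIn (S : CSpace X) (C D : Set X) : Prop :=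
  IsAnalyticIn S C D ∧ C.Nonempty ∧
  ∀ A₁ A₂ : Set X, IsAnalyticIn S A₁ D → IsAnalyticIn S A₂ D →
    C ⊆ A₁ ∪ A₂ → C ⊆ A₁ ∨ C ⊆ A₂

/-- An irreducible component of `D`: a maximal irreducible analytic subset. -/
def IsIrredComponentIn (S : CSpace X) (C D : Set X) : Prop :=
  IsIrreducibleAnalyticIn S C D ∧
  ∀ C' : Set X, IsIrreducibleAnalyticIn S C' D → C ⊆ C' → C' = C

/-- Local irreducibility (on `D`): every point has arbitrarily small irreducible open
neighborhoods. -/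
def IsLocallyIrreducibleIn (S : CSpace X) (D : Set X) : Prop :=
  ∀ x ∈ D, ∀ W : Set X, IsOpen W → x ∈ W →
    ∃ D' : Set X, IsOpen D' ∧ x ∈ D' ∧ D' ⊆ W ∩ D ∧ IsIrreducibleIn S D'

/-- Plurisubharmonicity of `u : X → [-∞,∞)` on an open subset `D` of a complex space:
`u` is not identically `-∞` on any irreducible component of `D` and, locally in charts,
`u` is the restriction of an ambient plurisubharmonic function. -/
def SpacePSHOn (S : CSpace X) (u : X → EReal) (D : Set X) : Prop :=
  (∀ x ∈ D, u x < ⊤) ∧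
  (∀ C : Set X, IsIrredComponentIn S C D → ∃ x ∈ C, u x ≠ ⊥) ∧
  ∀ x ∈ D, ∃ c ∈ S.atlas, x ∈ c.U ∧ ∃ V' : Set c.E, IsOpen V' ∧ V' ⊆ c.V ∧ c.φ x ∈ V' ∧
    {y ∈ c.U | c.φ y ∈ V'} ⊆ D ∧
    ∃ ψ : c.E → EReal, PSHOnE ψ V' ∧ ∀ y ∈ c.U, c.φ y ∈ V' → ψ (c.φ y) = u y

/-- Real analyticity on an open subset of a complex space, via charts. -/
def SpaceRealAnalyticOn (S : CSpace X) (f : X → ℝ) (D : Set X) : Prop :=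
  ∀ x ∈ D, ∃ c ∈ S.atlas, x ∈ c.U ∧ ∃ V' : Set c.E, IsOpen V' ∧ V' ⊆ c.V ∧ c.φ x ∈ V' ∧
    {y ∈ c.U | c.φ y ∈ V'} ⊆ D ∧
    ∃ g : c.E → ℝ, AnalyticOnNhd ℝ g V' ∧ ∀ y ∈ c.U, c.φ y ∈ V' → g (c.φ y) = f y

/-- Strong plurisubharmonicity on an open subset of a complex space, via charts. -/
def SpaceStronglyPSHOn (S : CSpace X) (f : X → ℝ) (D : Set X) : Prop :=
  ∀ x ∈ D, ∃ c ∈ S.atlas, x ∈ c.U ∧ ∃ V' : Set c.E, IsOpen V' ∧ V' ⊆ c.V ∧ c.φ x ∈ V' ∧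
    {y ∈ c.U | c.φ y ∈ V'} ⊆ D ∧
    ∃ g : c.E → ℝ, StronglyPSHOnE g V' ∧ ∀ y ∈ c.U, c.φ y ∈ V' → g (c.φ y) = f y

/-- `ψ` is an exhaustion function of `D`: all sublevel sets are relatively compact in `D`. -/
def IsExhaustionOn (ψ : X → ℝ) (D : Set X) : Prop :=
  ∀ c : ℝ, IsCompact (closure {x ∈ D | ψ x < c}) ∧ closure {x ∈ D | ψ x < c} ⊆ D

/-- The holomorphically convex hull of `K` with respect to holomorphic functions on the
open set `G`. -/
def holHull (S : CSpace X) (K G : Set X) : Set X :=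
  {x ∈ G | ∀ f : X → ℂ, SpaceHolOn S f G → ‖f x‖ ≤ sSup ((fun y => ‖f y‖) '' K)}

/-- The open subset `G` of the complex space is Stein: holomorphically convex and
holomorphically separable. -/
def IsSteinIn (S : CSpace X) (G : Set X) : Prop :=
  (∀ K : Set X, K ⊆ G → IsCompact K → IsCompact (holHull S K G)) ∧
  ∀ x ∈ G, ∀ y ∈ G, x ≠ y → ∃ f : X → ℂ, SpaceHolOn S f G ∧ f x ≠ f y

/-- All points of `D` are manifold points (charts onto open subsets of complex normed
spaces). -/
def IsManifoldIn (S : CSpace X) (D : Set X) : Prop :=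
  ∀ x ∈ D, ∃ c ∈ S.atlas, x ∈ c.U ∧ c.B = c.V

/-- The function `h_{A,D}` of Definition 2.8 (before regularization). -/
def relExtRaw (S : CSpace X) (A D : Set X) : X → EReal := fun z =>
  ⨆ u ∈ {u : X → EReal | SpacePSHOn S u D ∧ (∀ x ∈ D, u x ≤ 1) ∧ ∀ x ∈ A, u x ≤ 0}, u z

/-- The relative extremal function `h*_{A,D}`: the upper semicontinuous regularization
(within `D`) of `h_{A,D}`. -/
def relExt (S : CSpace X) (A D : Set X) : X → EReal := fun z =>
  limsup (relExtRaw S A D) (𝓝[D] z)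

/-- `P` is (locally) pluripolar in the open set `D`. -/
def IsPluripolarIn (S : CSpace X) (P D : Set X) : Prop :=
  ∀ x ∈ P, ∃ U : Set X, IsOpen U ∧ x ∈ U ∧ U ⊆ D ∧
    ∃ u : X → EReal, SpacePSHOn S u U ∧ ∀ y ∈ P ∩ U, u y = ⊥

/-- `A` is pluriregular at the point `a`. -/
def PluriregularAt (S : CSpace X) (A : Set X) (a : X) : Prop :=
  a ∈ closure A ∧ ∀ U : Set X, IsOpen U → a ∈ U → relExt S (A ∩ U) U a = 0

/-- `A` is locally pluriregular: nonempty and pluriregular at each of its points. -/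
def LocallyPluriregular (S : CSpace X) (A : Set X) : Prop :=
  A.Nonempty ∧ ∀ a ∈ A, PluriregularAt S A a

/-- A Josefson manifold: a complex manifold on which every (locally) pluripolar set is
globally pluripolar. -/
def IsJosefsonManifold (S : CSpace X) : Prop :=
  IsManifoldIn S univ ∧ ∀ P : Set X, IsPluripolarIn S P univ →
    ∃ u : X → EReal, SpacePSHOn S u univ ∧ ∀ x ∈ P, u x = ⊥

/-- Local (two-sided) boundedness of an `EReal`-valued function on `D`. -/
def LocBoundedOn (u : X → EReal) (D : Set X) : Prop :=
  ∀ x ∈ D, ∃ U : Set X, IsOpen U ∧ x ∈ U ∧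
    ∃ m M : ℝ, ∀ y ∈ U ∩ D, (m : EReal) ≤ u y ∧ u y ≤ (M : EReal)

/-- (Global) boundedness of an `EReal`-valued function on `D`. -/
def BoundedOn (u : X → EReal) (D : Set X) : Prop :=
  ∃ m M : ℝ, ∀ y ∈ D, (m : EReal) ≤ u y ∧ u y ≤ (M : EReal)

/-- `E` is locally `L`-regular (in the sense of Zeriahi): each of its points has a basis of
open neighborhoods in which the corresponding relative extremal functions are continuous
and vanish on `E`. -/
def LocallyLRegular (S : CSpace X) (E : Set X) : Prop :=
  ∀ x ∈ E, ∀ W : Set X, IsOpen W → x ∈ W →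
    ∃ U₀ : Set X, IsOpen U₀ ∧ x ∈ U₀ ∧ U₀ ⊆ W ∧
      ContinuousOn (relExt S (E ∩ U₀) U₀) U₀ ∧
      ∀ y ∈ E ∩ U₀, relExt S (E ∩ U₀) U₀ y = 0

end Space

open MeasureTheory

/-! ### The complex Monge–Ampère operator -/

/-- Second directional derivative. -/
def d2 {n : ℕ} (u : Cn n → ℝ) (z v w : Cn n) : ℝ :=
  fderiv ℝ (fun x => fderiv ℝ u x v) z w

/-- The complex Hessian `(∂²u/∂z_j ∂z̄_k)_{j,k}` of a real-valued function on `ℂⁿ`. -/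
def cHess {n : ℕ} (u : Cn n → ℝ) (z : Cn n) : Matrix (Fin n) (Fin n) ℂ :=
  Matrix.of fun j k =>
    (((d2 u z (Pi.single j 1) (Pi.single k 1) +
        d2 u z (Pi.single j Complex.I) (Pi.single k Complex.I) : ℝ) : ℂ) +
      Complex.I * ((d2 u z (Pi.single j 1) (Pi.single k Complex.I) -
        d2 u z (Pi.single j Complex.I) (Pi.single k 1) : ℝ) : ℂ)) / 4

/-- The density of `(dd^c u)^n` for a smooth `u`. -/
def maDensity {n : ℕ} (u : Cn n → ℝ) (z : Cn n) : ℝ :=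
  (4 : ℝ) ^ n * (n.factorial : ℝ) * ((cHess u z).det).re

/-- The Monge–Ampère measure `(dd^c u)^n` of a smooth function on `ℂⁿ`. -/
def smoothMA {n : ℕ} (u : Cn n → ℝ) : Measure (Cn n) :=
  volume.withDensity fun z => ENNReal.ofReal (maDensity u z)

/-- `μ` is the Bedford–Taylor Monge–Ampère measure `(dd^c u)^n` of a locally bounded
plurisubharmonic `u` on the open set `Ω ⊆ ℂⁿ`: `μ` is carried by `Ω` and is the weak-*
limit of the Monge–Ampère measures of any decreasing smooth plurisubharmonic
approximation of `u`. -/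
def IsMAOn {n : ℕ} (u : Cn n → EReal) (Ω : Set (Cn n)) (μ : Measure (Cn n)) : Prop :=
  (∀ A : Set (Cn n), MeasurableSet A → Disjoint A Ω → μ A = 0) ∧
  ∀ v : ℕ → Cn n → ℝ, (∀ j, ContDiff ℝ (⊤ : ℕ∞) (v j)) →
    (∀ j, PSHOnE (fun z => ((v j z : ℝ) : EReal)) Ω) →
    (∀ z ∈ Ω, Antitone fun j => v j z) →
    (∀ z ∈ Ω, Tendsto (fun j => ((v j z : ℝ) : EReal)) atTop (𝓝 (u z))) →
    ∀ f : Cn n → ℝ, Continuous f → HasCompactSupport f → tsupport f ⊆ Ω →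
      Tendsto (fun j => ∫ z, f z ∂(smoothMA (v j))) atTop (𝓝 (∫ z, f z ∂μ))

section SpaceMA

variable {X : Type*} [TopologicalSpace X]

/-- A holomorphic local coordinate system of dimension `n` on a complex space: a
homeomorphism `ρ` of an open `U₀ ⊆ X` onto an open `Ω₀ ⊆ ℂⁿ` which identifies the
holomorphic functions on both sides. -/
def IsLocalCoord (S : CSpace X) (n : ℕ) (U₀ : Set X) (ρ : X → Cn n) (Ω₀ : Set (Cn n)) :
    Prop :=
  IsOpen U₀ ∧ IsOpen Ω₀ ∧ ρ '' U₀ = Ω₀ ∧ InjOn ρ U₀ ∧ ContinuousOn ρ U₀ ∧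
  (∀ W : Set X, W ⊆ U₀ → IsOpen W → IsOpen (ρ '' W)) ∧
  (∀ j : Fin n, SpaceHolOn S (fun x => ρ x j) U₀) ∧
  ∀ f : X → ℂ, SpaceHolOn S f U₀ →
    ∃ F : Cn n → ℂ, DifferentiableOn ℂ F Ω₀ ∧ ∀ x ∈ U₀, F (ρ x) = f x

/-- The set of regular points of dimension `n`. -/
def RegLocus (S : CSpace X) (n : ℕ) : Set X :=
  {x | ∃ (U₀ : Set X) (ρ : X → Cn n) (Ω₀ : Set (Cn n)), IsLocalCoord S n U₀ ρ Ω₀ ∧ x ∈ U₀}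

/-- The open set `D` has pure dimension `n`: its `n`-dimensional regular points are dense
in it and it has regular points of no other dimension. -/
def PureDimensionIn (S : CSpace X) (D : Set X) (n : ℕ) : Prop :=
  D ⊆ closure (RegLocus S n ∩ D) ∧ ∀ k : ℕ, (RegLocus S k ∩ D).Nonempty → k = n

/-- `μ` is the Monge–Ampère measure `(dd^c u)^n` of `u` on the open subset `D` of a
complex space: it is carried by the regular part of `D` (i.e. extended by zero through
the singular set) and corresponds, in every local coordinate system, to the
Monge–Ampère measure in `ℂⁿ`. -/
def IsMAOnSpace [MeasurableSpace X] (S : CSpace X) (n : ℕ) (u : X → EReal) (D : Set X)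
    (μ : Measure X) : Prop :=
  (∀ A : Set X, MeasurableSet A → Disjoint A D → μ A = 0) ∧
  (∀ A : Set X, MeasurableSet A → A ⊆ D → Disjoint A (RegLocus S n) → μ A = 0) ∧
  ∀ (U₀ : Set X) (ρ : X → Cn n) (Ω₀ : Set (Cn n)), IsLocalCoord S n U₀ ρ Ω₀ → U₀ ⊆ D →
    ∃ (uu : Cn n → EReal) (ν : Measure (Cn n)),
      (∀ x ∈ U₀, uu (ρ x) = u x) ∧ IsMAOn uu Ω₀ ν ∧
      ∀ A : Set X, MeasurableSet A → A ⊆ U₀ → μ A = ν (ρ '' A)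

/-- `log` with values in `[-∞, ∞)`. -/
def elog (t : ℝ) : EReal := if t ≤ 0 then ⊥ else ((Real.log t : ℝ) : EReal)

/-- `g` is a parabolic potential on `D`: a nonnegative continuous plurisubharmonic
exhaustion function of `D` such that `log g` is plurisubharmonic and maximal
(`(dd^c log g)^n = 0`) off the zero set of `g`.  A Stein space possessing such a
potential is called weakly parabolic. -/
def WeaklyParabolicIn [MeasurableSpace X] (S : CSpace X) (n : ℕ) (g : X → ℝ) (D : Set X) :
    Prop :=
  (∀ x ∈ D, 0 ≤ g x) ∧ ContinuousOn g D ∧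
  SpacePSHOn S (fun x => ((g x : ℝ) : EReal)) D ∧
  IsExhaustionOn g D ∧
  SpacePSHOn S (fun x => elog (g x)) D ∧
  IsMAOnSpace S n (fun x => elog (g x)) {x ∈ D | g x ≠ 0} (0 : Measure X)

end SpaceMA

/-! ### Products of complex spaces, generalized crosses -/

section Pi

variable {ι : Type*} [Fintype ι] {Z : ι → Type*} [∀ i, TopologicalSpace (Z i)]

/-- Holomorphy of a function on an open subset of a finite product of complex spaces,
via products of charts. -/
def PiHolOn (T : ∀ i, CSpace (Z i)) (f : (∀ i, Z i) → ℂ) (Ω : Set (∀ i, Z i)) : Prop :=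
  ∀ w ∈ Ω, ∃ c : ∀ i, CChart (Z i), (∀ i, c i ∈ (T i).atlas) ∧ (∀ i, w i ∈ (c i).U) ∧
    ∃ V' : Set (∀ i, (c i).E), IsOpen V' ∧ (fun i => (c i).φ (w i)) ∈ V' ∧
      {y : ∀ i, Z i | (∀ i, y i ∈ (c i).U) ∧ (fun i => (c i).φ (y i)) ∈ V'} ⊆ Ω ∧
      ∃ F : (∀ i, (c i).E) → ℂ, DifferentiableOn ℂ F V' ∧
        ∀ y : ∀ i, Z i, (∀ i, y i ∈ (c i).U) → ((fun i => (c i).φ (y i)) ∈ V') →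
          F (fun i => (c i).φ (y i)) = f y

/-- Plurisubharmonicity on an open subset of a finite product of complex spaces, via
products of charts. -/
def PiPSHOn (T : ∀ i, CSpace (Z i)) (u : (∀ i, Z i) → EReal) (Ω : Set (∀ i, Z i)) : Prop :=
  (∀ z ∈ Ω, u z < ⊤) ∧
  (¬ ∃ U : Set (∀ i, Z i), U ⊆ Ω ∧ IsOpen U ∧ U.Nonempty ∧ ∀ z ∈ U, u z = ⊥) ∧
  ∀ w ∈ Ω, ∃ c : ∀ i, CChart (Z i), (∀ i, c i ∈ (T i).atlas) ∧ (∀ i, w i ∈ (c i).U) ∧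
    ∃ V' : Set (∀ i, (c i).E), IsOpen V' ∧ (fun i => (c i).φ (w i)) ∈ V' ∧
      {y : ∀ i, Z i | (∀ i, y i ∈ (c i).U) ∧ (fun i => (c i).φ (y i)) ∈ V'} ⊆ Ω ∧
      ∃ ψ : (∀ i, (c i).E) → EReal, PSHOnE ψ V' ∧
        ∀ y : ∀ i, Z i, (∀ i, y i ∈ (c i).U) → ((fun i => (c i).φ (y i)) ∈ V') →
          ψ (fun i => (c i).φ (y i)) = u y

/-- The function `h_{A,D}` on a product of complex spaces. -/
def PiRelExtRaw (T : ∀ i, CSpace (Z i)) (A D : Set (∀ i, Z i)) : (∀ i, Z i) → EReal :=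
  fun z =>
    ⨆ u ∈ {u : (∀ i, Z i) → EReal |
      PiPSHOn T u D ∧ (∀ x ∈ D, u x ≤ 1) ∧ ∀ x ∈ A, u x ≤ 0}, u z

/-- The relative extremal function `h*_{A,D}` on a product of complex spaces. -/
def PiRelExt (T : ∀ i, CSpace (Z i)) (A D : Set (∀ i, Z i)) : (∀ i, Z i) → EReal :=
  fun z => limsup (PiRelExtRaw T A D) (𝓝[D] z)

/-- Pluripolar subsets of a finite product of complex spaces. -/
def PiPluripolar (T : ∀ i, CSpace (Z i)) (P : Set (∀ i, Z i)) : Prop :=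
  ∀ w ∈ P, ∃ U : Set (∀ i, Z i), IsOpen U ∧ w ∈ U ∧
    ∃ u : (∀ i, Z i) → EReal, PiPSHOn T u U ∧ ∀ y ∈ P ∩ U, u y = ⊥

end Pi

section Cross

variable {N : ℕ} {X : Fin N → Type*}

/-- The number of `1`-entries of `α`; `α ∈ I(N,k)` iff `idxCard α = k`. -/
def idxCard (α : Fin N → Bool) : ℕ := (Finset.univ.filter fun j => α j = true).card

/-- `i_{a,α}`: the point of the product whose coordinates are those of `z` where
`α j = 1` and those of `a` where `α j = 0`. -/
def insertCoords (α : Fin N → Bool) (a : ∀ j : {j : Fin N // α j = false}, X j.1)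
    (z : ∀ j : {j : Fin N // α j = true}, X j.1) : ∀ j, X j :=
  fun j => if h : α j = true then z ⟨j, h⟩ else a ⟨j, Bool.eq_false_iff.mpr h⟩

/-- The projection `a ↦ a_α^0` onto the coordinates with `α j = 0`. -/
def proj0 (α : Fin N → Bool) (w : ∀ j, X j) : ∀ j : {j : Fin N // α j = false}, X j.1 :=
  fun j => w j.1

/-- The set `A_α` (the product of the `A_j` with `α_j = 0`). -/
def piASet (A : ∀ j, Set (X j)) (α : Fin N → Bool) :
    Set (∀ j : {j : Fin N // α j = false}, X j.1) :=
  {a | ∀ j, a j ∈ A j.1}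

/-- The generalized `(N,k)`-cross `T_{N,k}((A_j, X_j)_j, (Σ_α)_α)` (with `D_j = X_j`). -/
def crossT (A : ∀ j, Set (X j)) (k : ℕ)
    (Sig : ∀ α : Fin N → Bool, Set (∀ j : {j : Fin N // α j = false}, X j.1)) :
    Set (∀ j, X j) :=
  {w | ∃ α : Fin N → Bool, idxCard α = k ∧
    (∀ j : {j : Fin N // α j = false}, w j.1 ∈ A j.1) ∧ proj0 α w ∉ Sig α}

variable [∀ j, TopologicalSpace (X j)]

/-- `f ∈ 𝒪_s(T_{N,k})`: separate holomorphy on the generalized `(N,k)`-cross. -/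
def SepHol (S : ∀ j, CSpace (X j)) (A : ∀ j, Set (X j)) (k : ℕ)
    (Sig : ∀ α : Fin N → Bool, Set (∀ j : {j : Fin N // α j = false}, X j.1))
    (f : (∀ j, X j) → ℂ) : Prop :=
  ∀ α : Fin N → Bool, idxCard α = k →
    ∀ a : ∀ j : {j : Fin N // α j = false}, X j.1, a ∈ piASet A α → a ∉ Sig α →
      PiHolOn (fun j : {j : Fin N // α j = true} => S j.1)
        (fun z => f (insertCoords α a z)) univ

/-- `f ∈ 𝒪_s^c(T_{N,k})`: separately holomorphic, and continuous on `A_α \ Σ_α` in the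
remaining variables. -/
def SepHolC (S : ∀ j, CSpace (X j)) (A : ∀ j, Set (X j)) (k : ℕ)
    (Sig : ∀ α : Fin N → Bool, Set (∀ j : {j : Fin N // α j = false}, X j.1))
    (f : (∀ j, X j) → ℂ) : Prop :=
  SepHol S A k Sig f ∧
  ∀ α : Fin N → Bool, idxCard α = k →
    ∀ b : ∀ j : {j : Fin N // α j = true}, X j.1,
      ContinuousOn (fun a : ∀ j : {j : Fin N // α j = false}, X j.1 =>
        f (insertCoords α a b)) (piASet A α \ Sig α)

/-- The envelope `X̂_{N,k}` of the `(N,k)`-cross. -/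
def crossEnvelope (S : ∀ j, CSpace (X j)) (A : ∀ j, Set (X j))
    (k : ℝ) : Set (∀ j, X j) :=
  {z | (∑ j, relExt (S j) (A j) univ (z j)) < ((k : ℝ) : EReal)}

end Cross

theorem aux_usc {E : Type*} [NormedAddCommGroup E] [NormedSpace ℂ E] {g : E → ℝ} {ε k m : ℝ}
    (hk : 0 < k) {U : Set E}
    (h : UpperSemicontinuousOn (fun z => ((g z - ε * ‖z‖ ^ 2 : ℝ) : EReal)) U) :
    UpperSemicontinuousOn (fun z => ((k * (g z - m) : ℝ) : EReal)) U := by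
  intro x hx y hy
  obtain ⟨r, hr1, hr2⟩ := EReal.lt_iff_exists_real_btwn.1 hy
  have hr1 : k * (g x - m) < r := EReal.coe_lt_coe_iff.1 hr1
  have h1 : g x < r / k + m := by
    have : g x - m < r / k := by rw [lt_div_iff₀ hk]; linarith
    linarith
  set δ := (r / k + m - g x) / 2 with hδ
  have hδ0 : 0 < δ := by rw [hδ]; linarith
  have e1 := h x hx ((g x - ε * ‖x‖ ^ 2 + δ : ℝ) : EReal) (by
    show ((g x - ε * ‖x‖ ^ 2 : ℝ) : EReal) < _
    exact_mod_cast (by linarith))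
  have hc : Continuous (fun z : E => ε * ‖z‖ ^ 2) := by fun_prop
  have e2 : ∀ᶠ z in 𝓝[U] x, ε * ‖z‖ ^ 2 < ε * ‖x‖ ^ 2 + δ :=
    (hc.continuousWithinAt (s := U) (x := x)).eventually_lt_const (by linarith)
  filter_upwards [e1, e2] with z hz1 hz2
  have hz1 : g z - ε * ‖z‖ ^ 2 < g x - ε * ‖x‖ ^ 2 + δ := by exact_mod_cast hz1
  refine lt_of_lt_of_le ?_ hr2.le
  have h3 : g z - m < r / k := by linarith
  have : k * (g z - m) < r := by
    rw [lt_div_iff₀ hk] at h3; linarith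
  exact_mod_cast this

theorem aux_psh {E : Type*} [NormedAddCommGroup E] [NormedSpace ℂ E] {g : E → ℝ} {ε k m : ℝ}
    (hk : 0 < k) (hε : 0 < ε) {U U' : Set E} (hUU : U' ⊆ U)
    (h : PSHOnE (fun z => ((g z - ε * ‖z‖ ^ 2 : ℝ) : EReal)) U) :
    PSHOnE (fun z => ((k * (g z - m) : ℝ) : EReal)) U' := by
  have husc : UpperSemicontinuousOn (fun z => ((k * (g z - m) : ℝ) : EReal)) U' :=
    fun x hx y hy => nhdsWithin_mono x hUU (aux_usc hk h.2.1 x (hUU hx) y hy)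
  refine ⟨fun z _ => EReal.coe_lt_top _, husc, ?_, ?_⟩
  · rintro ⟨W, -, -, ⟨z, hz⟩, hW⟩
    exact EReal.coe_ne_bot _ (hW z hz)
  · intro a b
    have hcont : Continuous (fun w : ℂ => a + w • b) := by fun_prop
    refine ⟨?_, ?_⟩
    · intro w hw y hy
      have ht : Tendsto (fun w : ℂ => a + w • b) (𝓝[{w : ℂ | a + w • b ∈ U'}] w)
          (𝓝[U'] (a + w • b)) :=
        tendsto_nhdsWithin_of_tendsto_nhds_of_eventually_within _
          (hcont.tendsto w |>.mono_left nhdsWithin_le_nhds) self_mem_nhdsWithin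
      exact ht.eventually (husc _ hw y hy)
    · intro z₀ r hr hball H Hc Hh Hs z hz
      obtain ⟨f, hf1, hf2⟩ := exists_dual_vector'' ℂ (a + z • b)
      set p := a + z • b with hp
      have key := (h.2.2.2 a b).2 z₀ r hr (fun w hw => hUU (hball hw))
        (fun w => H w / k + m - ε * (2 * ‖p‖ * (f (a + w • b)).re - ‖p‖ ^ 2)) ?_ ?_ ?_ z hz
      · have key : g p - ε * ‖p‖ ^ 2 ≤
            H z / k + m - ε * (2 * ‖p‖ * (f p).re - ‖p‖ ^ 2) := EReal.coe_le_coe_iff.1 key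
        have hre : (f p).re = ‖p‖ := by rw [hf2]; simp
        rw [hre] at key
        have h3 : g p - m ≤ H z / k := by nlinarith
        rw [le_div_iff₀ hk] at h3
        have : k * (g p - m) ≤ H z := by linarith
        exact EReal.coe_le_coe_iff.2 this
      · have : Continuous (fun w : ℂ => ε * (2 * ‖p‖ * (f (a + w • b)).re - ‖p‖ ^ 2)) := by
          fun_prop
        exact ((Hc.div_const k).add continuousOn_const).sub this.continuousOn
      · intro w hw
        obtain ⟨W, hWo, hwW, hWs, F, hF, hFe⟩ := Hh w hw
        refine ⟨W, hWo, hwW, hWs, fun w => F w / (k : ℂ) + (m : ℂ) -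
          (ε : ℂ) * (2 * (‖p‖ : ℂ) * f (a + w • b) - (‖p‖ : ℂ) ^ 2), ?_, ?_⟩
        · have h2 : Differentiable ℂ (fun w : ℂ =>
              (ε : ℂ) * (2 * (‖p‖ : ℂ) * f (a + w • b) - (‖p‖ : ℂ) ^ 2)) := by
            have : Differentiable ℂ (fun w : ℂ => f (a + w • b)) :=
              f.differentiable.comp (by fun_prop)
            fun_prop
          exact ((hF.div_const _).add_const _).sub h2.differentiableOn
        · intro v hv
          have e : (ε : ℂ) * (2 * (‖p‖ : ℂ) * f (a + v • b) - (‖p‖ : ℂ) ^ 2) =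
            (ε : ℂ) * (((2 * ‖p‖ : ℝ) : ℂ) * f (a + v • b) - ((‖p‖ ^ 2 : ℝ) : ℂ)) := by
            push_cast; ring
          simp only []
          rw [e, hFe v hv]
          simp only [Complex.sub_re, Complex.add_re, Complex.re_ofReal_mul, Complex.ofReal_re,
            Complex.div_ofReal_re]
      · intro w hw
        have hHs : k * (g (a + w • b) - m) ≤ H w := EReal.coe_le_coe_iff.1 (Hs w hw)
        have h3 : g (a + w • b) - m ≤ H w / k := by rw [le_div_iff₀ hk]; linarith
        set q := a + w • b with hq
        have h4 : (f q).re ≤ ‖q‖ := by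
          refine (Complex.re_le_norm _).trans ((f.le_opNorm q).trans ?_)
          nlinarith [norm_nonneg q]
        have h5 : 2 * ‖p‖ * (f q).re - ‖p‖ ^ 2 ≤ ‖q‖ ^ 2 := by
          nlinarith [norm_nonneg p, sq_nonneg (‖p‖ - ‖q‖), mul_le_mul_of_nonneg_left h4 (norm_nonneg p)]
        have h6 := mul_le_mul_of_nonneg_left h5 hε.le
        have : g q - ε * ‖q‖ ^ 2 ≤
          H w / k + m - ε * (2 * ‖p‖ * (f q).re - ‖p‖ ^ 2) := by linarith
        exact EReal.coe_le_coe_iff.2 this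

theorem aux_cont {Y : Type*} [TopologicalSpace Y] (S : CSpace Y) (ψ : Y → ℝ)
    (hψan : SpaceRealAnalyticOn S ψ univ) : Continuous ψ := by
  rw [continuous_iff_continuousAt]
  intro x
  obtain ⟨d, hd, hxU, V', hV'o, -, hxV', -, g, hg, hge⟩ := hψan x (mem_univ x)
  have hφ : ContinuousAt d.φ x := d.contOn.continuousAt (d.openU.mem_nhds hxU)
  have h1 : ContinuousAt (fun y => g (d.φ y)) x :=
    ContinuousAt.comp (f := d.φ) (g := g) (hg _ hxV').continuousAt hφ
  refine h1.congr ?_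
  filter_upwards [d.openU.mem_nhds hxU, hφ.eventually (hV'o.mem_nhds hxV')] with y h1 h2
  exact hge y h1 h2

theorem aux_spsh {Y : Type*} [TopologicalSpace Y] (S : CSpace Y) (ψ : Y → ℝ)
    (hψpsh : SpaceStronglyPSHOn S ψ univ) {D : Set Y} (hD : IsOpen D) {k m : ℝ} (hk : 0 < k) :
    SpacePSHOn S (fun x => ((k * (ψ x - m) : ℝ) : EReal)) D := by
  refine ⟨fun x _ => EReal.coe_lt_top _, ?_, ?_⟩
  · rintro C ⟨⟨-, ⟨x, hx⟩, -⟩, -⟩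
    exact ⟨x, hx, EReal.coe_ne_bot _⟩
  · intro x hx
    obtain ⟨d, hd, hxU, V', hV'o, hV's, hxV', -, g, hg, hge⟩ := hψpsh x (mem_univ x)
    obtain ⟨ε, hε, U, hUo, hxU', hUV, hU⟩ := hg _ hxV'
    obtain ⟨V'', hV''o, hV''⟩ := d.open_image (d.U ∩ D) inter_subset_left (d.openU.inter hD)
    have hxV'' : d.φ x ∈ V'' := by
      have : d.φ x ∈ d.φ '' (d.U ∩ D) := ⟨x, ⟨hxU, hx⟩, rfl⟩
      rw [hV''] at this
      exact this.2
    refine ⟨d, hd, hxU, U ∩ V'', hUo.inter hV''o, fun z hz => hV's (hUV hz.1),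
      ⟨hxU', hxV''⟩, ?_, fun z => ((k * (g z - m) : ℝ) : EReal),
      aux_psh hk hε inter_subset_left hU, ?_⟩
    · rintro y ⟨hy, -, hy2⟩
      have : d.φ y ∈ d.φ '' (d.U ∩ D) := by
        rw [hV'']; exact ⟨d.mapsToB y hy, hy2⟩
      obtain ⟨y', hy', he⟩ := this
      rw [← d.injOn hy'.1 hy he]
      exact hy'.2
    · intro y hy hy2
      show ((k * (g (d.φ y) - m) : ℝ) : EReal) = _
      rw [hge y hy (hUV hy2.1)]

/-- Proposition 2.13.  Let `Y` be an irreducible Stein space, `ψ` a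
real analytic strongly plurisubharmonic exhaustion function, `X = {ψ < c}` and `A ⊆ X`
relatively compact.  Then `h_{A,X}(x) → 1` as `X ∋ x → x₀` for every `x₀ ∈ ∂X`. -/
theorem relExtRaw_boundary_limit {Y : Type*} [TopologicalSpace Y] [T2Space Y]
    [SecondCountableTopology Y] (S : CSpace Y) (hirr : IsIrreducibleIn S univ)
    (hStein : IsSteinIn S univ) (ψ : Y → ℝ) (hψan : SpaceRealAnalyticOn S ψ univ)
    (hψpsh : SpaceStronglyPSHOn S ψ univ) (hψexh : IsExhaustionOn ψ univ) (c : ℝ)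
    (A : Set Y) (hA : A ⊆ {y | ψ y < c}) (hArc : IsCompact (closure A))
    (hAcl : closure A ⊆ {y | ψ y < c}) :
    ∀ x₀ ∈ frontier {y : Y | ψ y < c},
      Tendsto (relExtRaw S A {y : Y | ψ y < c}) (𝓝[{y : Y | ψ y < c}] x₀)
        (𝓝 (1 : EReal)) := by
  intro x₀ hx₀
  have hcont := aux_cont S ψ hψan
  have hDo : IsOpen {y : Y | ψ y < c} := isOpen_lt hcont continuous_const
  have hxc : ψ x₀ = c := by
    rw [hDo.frontier_eq] at hx₀
    have h1 : ψ x₀ ≤ c := closure_lt_subset_le hcont continuous_const hx₀.1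
    exact le_antisymm h1 (not_lt.1 hx₀.2)
  obtain ⟨m, hm, hmA⟩ : ∃ m, m < c ∧ ∀ x ∈ A, ψ x ≤ m := by
    rcases A.eq_empty_or_nonempty with h | h
    · exact ⟨c - 1, by linarith, by simp [h]⟩
    · obtain ⟨x, hx, hmax⟩ := hArc.exists_isMaxOn h.closure hcont.continuousOn
      exact ⟨ψ x, hAcl hx, fun y hy => hmax (subset_closure hy)⟩
  have hk : 0 < (c - m)⁻¹ := inv_pos.2 (by linarith)
  have hk1 : (c - m)⁻¹ * (c - m) = 1 := inv_mul_cancel₀ (by linarith)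
  have hlim : Tendsto (fun x => (((c - m)⁻¹ * (ψ x - m) : ℝ) : EReal))
      (𝓝[{y : Y | ψ y < c}] x₀) (𝓝 (1 : EReal)) := by
    have h1 : Continuous (fun x => (((c - m)⁻¹ * (ψ x - m) : ℝ) : EReal)) :=
      continuous_coe_real_ereal.comp (by fun_prop)
    have h2 := (h1.tendsto x₀).mono_left (nhdsWithin_le_nhds (s := {y : Y | ψ y < c}))
    rw [hxc, hk1] at h2
    exact h2
  refine tendsto_of_tendsto_of_tendsto_of_le_of_le' hlim tendsto_const_nhds ?_ ?_
  · refine Eventually.of_forall fun x => ?_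
    refine le_iSup₂_of_le (f := fun (u : Y → EReal) _ => u x)
      (fun x => (((c - m)⁻¹ * (ψ x - m) : ℝ) : EReal)) ⟨aux_spsh S ψ hψpsh hDo hk, ?_, ?_⟩ le_rfl
    · intro y hy
      have hy : ψ y < c := hy
      have : (c - m)⁻¹ * (ψ y - m) ≤ 1 := by
        rw [← hk1]; exact mul_le_mul_of_nonneg_left (by linarith) hk.le
      exact EReal.coe_le_coe_iff.2 this
    · intro y hy
      have : (c - m)⁻¹ * (ψ y - m) ≤ 0 :=
        mul_nonpos_of_nonneg_of_nonpos hk.le (by linarith [hmA y hy])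
      exact EReal.coe_le_coe_iff.2 this
  · filter_upwards [self_mem_nhdsWithin] with x hx
    exact iSup₂_le fun u hu => hu.2.1 x hx
end
end

section
/- Let X be a Stein space and let (K_j)_{j∈ℕ} be a decreasing sequence of compact subsets of X with ⋂_{j∈ℕ} K_j = K. Then h_{K_j,X} increases pointwise to h_{K,X}. -/
/-!
Common framework: plurisubharmonic functions, (reduced) complex spaces modeled by
charts onto analytic subvarieties of open subsets of finite-dimensional complex
normed spaces, relative extremal functions, pluripolarity, Stein spaces,
Monge–Ampère operators, and crosses in products of complex spaces.
-/

open Set Filter Topology Metric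

noncomputable section

open MeasureTheory

theorem aux_sub_lt (a y : EReal) (ε : ℝ) : a - (ε : EReal) < y ↔ a < y + (ε : EReal) :=
  EReal.sub_lt_iff (Or.inl (EReal.coe_ne_bot _)) (Or.inl (EReal.coe_ne_top _))

theorem aux_sub_le (a y : EReal) (ε : ℝ) : a - (ε : EReal) ≤ y ↔ a ≤ y + (ε : EReal) :=
  EReal.sub_le_iff_le_add (Or.inl (EReal.coe_ne_bot _)) (Or.inl (EReal.coe_ne_top _))

theorem aux_usc_s11 {α : Type*} [TopologicalSpace α] {u : α → EReal} {s : Set α}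
    (h : UpperSemicontinuousOn u s) (ε : ℝ) :
    UpperSemicontinuousOn (fun x => u x - (ε : EReal)) s := by
  intro x hx y hy
  have := h x hx (y + (ε : EReal)) ((aux_sub_lt _ _ _).1 hy)
  exact this.mono fun z hz => (aux_sub_lt _ _ _).2 hz

theorem aux_sub_lt_top {a : EReal} (h : a < ⊤) (ε : ℝ) : a - (ε : EReal) < ⊤ := by
  rw [aux_sub_lt]; simpa using h

theorem aux_sub_eq_bot {a : EReal} {ε : ℝ} (h : a - (ε : EReal) = ⊥) : a = ⊥ := by
  have h1 : a - (ε : EReal) ≤ ⊥ := h.le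
  rw [aux_sub_le] at h1
  simpa using h1

theorem aux_sh {u : ℂ → EReal} {Ω : Set ℂ} (hu : SubharmonicOnCC u Ω) (ε : ℝ) :
    SubharmonicOnCC (fun x => u x - (ε : EReal)) Ω := by
  refine ⟨aux_usc_s11 hu.1 ε, fun a r hr hs h hc hh hle z hz => ?_⟩
  rw [aux_sub_le]
  have := hu.2 a r hr hs (fun w => h w + ε) (hc.add continuousOn_const) ?_ ?_ z hz
  · simpa using this
  · intro w hw
    obtain ⟨W, hW, hwW, hWs, f, hf, hfe⟩ := hh w hw
    exact ⟨W, hW, hwW, hWs, fun w => f w + (ε : ℂ), hf.add_const _, fun v hv => by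
      simp [hfe v hv]⟩
  · intro w hw
    have := (aux_sub_le _ _ _).1 (hle w hw)
    simpa using this

theorem aux_psh_s11 {E : Type*} [NormedAddCommGroup E] [NormedSpace ℂ E] {u : E → EReal}
    {Ω : Set E} (hu : PSHOnE u Ω) (ε : ℝ) : PSHOnE (fun x => u x - (ε : EReal)) Ω := by
  refine ⟨fun z hz => aux_sub_lt_top (hu.1 z hz) ε, aux_usc_s11 hu.2.1 ε, ?_,
    fun a b => aux_sh (hu.2.2.2 a b) ε⟩
  rintro ⟨U, h1, h2, h3, h4⟩
  exact hu.2.2.1 ⟨U, h1, h2, h3, fun z hz => aux_sub_eq_bot (h4 z hz)⟩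

theorem aux_space_psh {X : Type*} [TopologicalSpace X] {S : CSpace X} {u : X → EReal}
    {D : Set X} (hu : SpacePSHOn S u D) (ε : ℝ) :
    SpacePSHOn S (fun x => u x - (ε : EReal)) D := by
  refine ⟨fun z hz => aux_sub_lt_top (hu.1 z hz) ε, fun C hC => ?_, fun x hx => ?_⟩
  · obtain ⟨x, hx, hb⟩ := hu.2.1 C hC
    exact ⟨x, hx, fun h => hb (aux_sub_eq_bot h)⟩
  · obtain ⟨c, hc, hxc, V', h1, h2, h3, h4, ψ, h5, h6⟩ := hu.2.2 x hx
    exact ⟨c, hc, hxc, V', h1, h2, h3, h4, fun y => ψ y - (ε : EReal), aux_psh_s11 h5 ε,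
      fun y hy hyV => by simp only [h6 y hy hyV]⟩

theorem aux_space_usc {X : Type*} [TopologicalSpace X] {S : CSpace X} {u : X → EReal}
    (hu : SpacePSHOn S u univ) (t : EReal) : IsOpen {x | u x < t} := by
  rw [isOpen_iff_mem_nhds]
  intro x hx
  obtain ⟨c, hc, hxc, V', h1, h2, h3, h4, ψ, h5, h6⟩ := hu.2.2 x (mem_univ x)
  have hx' : ψ (c.φ x) < t := by rw [h6 x hxc h3]; exact hx
  have hψ := h5.2.1 (c.φ x) h3 t hx'
  rw [h1.nhdsWithin_eq h3] at hψ
  have hcont : ContinuousAt c.φ x := c.contOn.continuousAt (c.openU.mem_nhds hxc)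
  filter_upwards [hcont.eventually hψ, hcont.eventually (h1.mem_nhds h3),
    c.openU.mem_nhds hxc] with y hy1 hy2 hy3
  simpa [h6 y hy3 hy2] using hy1

/-- Proposition 2.14.  If `(K_j)` is a decreasing sequence of compact
subsets of a Stein space `X` with `⋂ K_j = K`, then `h_{K_j,X} ↗ h_{K,X}` pointwise. -/
theorem relExtRaw_of_decreasing_compacts {X : Type*} [TopologicalSpace X] [T2Space X]
    [SecondCountableTopology X] (S : CSpace X) (hStein : IsSteinIn S univ)
    (K : ℕ → Set X) (hKcpt : ∀ j, IsCompact (K j)) (hKdec : Antitone K)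
    (Kinf : Set X) (hKinf : (⋂ j, K j) = Kinf) :
    ∀ z : X, (Monotone fun j => relExtRaw S (K j) univ z) ∧
      Tendsto (fun j => relExtRaw S (K j) univ z) atTop
        (𝓝 (relExtRaw S Kinf univ z)) := by
  intro z
  have anti : ∀ A B : Set X, A ⊆ B → relExtRaw S B univ z ≤ relExtRaw S A univ z := by
    intro A B hAB
    refine iSup₂_le fun u hu => ?_
    exact le_iSup₂ (f := fun (u : X → EReal) (_ : u ∈ {u : X → EReal | SpacePSHOn S u univ ∧
      (∀ x ∈ univ, u x ≤ 1) ∧ ∀ x ∈ A, u x ≤ 0}) => u z) u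
      ⟨hu.1, hu.2.1, fun x hx => hu.2.2 x (hAB hx)⟩
  have hmono : Monotone fun j => relExtRaw S (K j) univ z :=
    fun i j hij => anti _ _ (hKdec hij)
  refine ⟨hmono, ?_⟩
  have heq : relExtRaw S Kinf univ z = ⨆ j, relExtRaw S (K j) univ z := by
    apply le_antisymm
    · refine iSup₂_le fun u hu => ?_
      obtain ⟨hu1, hu2, hu3⟩ := hu
      have key : ∀ ε : ℝ, 0 < ε → u z - (ε : EReal) ≤ ⨆ j, relExtRaw S (K j) univ z := by
        intro ε hε
        have hε' : (0 : EReal) < (ε : EReal) := by exact_mod_cast hε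
        obtain ⟨j, hj⟩ := exists_subset_nhds_of_isCompact (V := K)
          hKdec.directed_ge hKcpt (U := {x | u x < (ε : EReal)}) (fun x hx =>
            (aux_space_usc hu1 _).mem_nhds (by
              rw [hKinf] at hx
              exact lt_of_le_of_lt (hu3 x hx) hε'))
        refine le_trans ?_ (le_iSup _ j)
        exact le_iSup₂ (f := fun (u : X → EReal) (_ : u ∈ {u : X → EReal |
          SpacePSHOn S u univ ∧ (∀ x ∈ univ, u x ≤ 1) ∧ ∀ x ∈ K j, u x ≤ 0}) => u z)
          (fun x => u x - (ε : EReal))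
          ⟨aux_space_psh hu1 ε,
            fun x hx => (aux_sub_le _ _ _).2 ((hu2 x hx).trans (le_add_of_nonneg_right hε'.le)),
            fun x hx => (aux_sub_le _ _ _).2 (by simpa using (le_of_lt (hj hx)))⟩
      refine le_of_forall_lt fun b hb => ?_
      obtain ⟨r, hbr, hru⟩ := EReal.lt_iff_exists_real_btwn.1 hb
      obtain ⟨s, hrs, hsu⟩ := EReal.lt_iff_exists_real_btwn.1 hru
      have hrs' : r < s := by exact_mod_cast hrs
      refine lt_of_lt_of_le hbr (le_trans ?_ (key (s - r) (sub_pos.2 hrs')))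
      refine le_trans ?_ (EReal.sub_le_sub hsu.le le_rfl)
      rw [← EReal.coe_sub]
      exact_mod_cast (by linarith : r ≤ s - (s - r))
    · refine iSup_le fun j => anti _ _ ?_
      rw [← hKinf]
      exact iInter_subset _ j
  rw [heq]
  exact tendsto_atTop_iSup hmono
end
end
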